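/- Let k be an infinite field, r a nonzero integer, and m ≥ 1, with the multiplicative group kˣ acting on k[Y,Z] by t·Y = t^(−r)·Y, t·Z = t^(mr)·Z. Then the least positive degree of a kˣ-invariant homogeneous polynomial f ∈ k[Y,Z] with f(1,1) ≠ 0 equals m + 1; that is, every invariant homogeneous polynomial of positive degree with f(1,1) ≠ 0 has degree at least m + 1, and the invariant Y^m·Z has degree m + 1 and value 1 at (1,1). -/

import Mathlib

open MvPolynomial

/-- For `t ∈ kˣ`, the `k`-algebra automorphism of `k[Y,Z]` (with `Y = X 0`, `Z = X 1`)
determined by `Y ↦ t^(−r)·Y` and `Z ↦ t^(mr)·Z`. -/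
noncomputable def torusSubst (k : Type*) [Field k] (r : ℤ) (m : ℕ) (t : kˣ) :
    MvPolynomial (Fin 2) k →ₐ[k] MvPolynomial (Fin 2) k :=
  MvPolynomial.aeval
    ![MvPolynomial.C ((t ^ (-r) : kˣ) : k) * MvPolynomial.X 0,
      MvPolynomial.C ((t ^ ((m : ℤ) * r) : kˣ) : k) * MvPolynomial.X 1]

/-!
A polynomial is invariant under the torus exactly when each of its monomials has weight zero,
because distinct characters `t ↦ t ^ n` of an infinite torus are distinct functions. For the
weights `-r` and `m * r` of `Y` and `Z`, weight zero forces a monomial to be a power of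
`Y ^ m * Z`, so the degree of a nonzero invariant homogeneous polynomial is a multiple of `m + 1`.
-/

theorem infinite_units (k : Type*) [GroupWithZero k] [Infinite k] : Infinite kˣ := by
  have : Infinite {a : k // a ≠ 0} := (Set.finite_singleton (0 : k)).infinite_compl.to_subtype
  exact unitsEquivNeZero.infinite_iff.mpr this

theorem exponent_units_eq_zero (R : Type*) [CommRing R] [IsDomain R] [Infinite Rˣ] :
    Monoid.exponent Rˣ = 0 := by
  by_contra h
  have : NeZero (Monoid.exponent Rˣ) := ⟨h⟩
  have htop : rootsOfUnity (Monoid.exponent Rˣ) R = ⊤ :=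
    eq_top_iff.mpr fun t _ => Monoid.pow_exponent_eq_one t
  have hfinite : Finite (⊤ : Subgroup Rˣ) := htop ▸ inferInstance
  exact (Subgroup.topEquiv.toEquiv.finite_iff.mp hfinite).false

theorem eq_of_forall_units_zpow_eq (R : Type*) [CommRing R] [IsDomain R] [Infinite Rˣ] {a b : ℤ}
    (h : ∀ t : Rˣ, t ^ a = t ^ b) : a = b := by
  have hdvd : (Monoid.exponent Rˣ : ℤ) ∣ a - b :=
    Group.exponent_dvd_sub_iff_zpow_eq_zpow.mpr h
  rwa [exponent_units_eq_zero, Nat.cast_zero, zero_dvd_iff, sub_eq_zero] at hdvd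

theorem zpow_weight {σ G : Type*} [CommGroup G] (w : σ → ℤ) (g : G) (d : σ →₀ ℕ) :
    g ^ Finsupp.weight w d = d.prod fun i n => (g ^ w i) ^ n := by
  induction d using Finsupp.induction_linear with
  | zero => simp
  | add d e hd he =>
    rw [map_add, zpow_add, hd, he,
      Finsupp.prod_add_index' (fun _ => pow_zero _) (fun _ => pow_add _)]
  | single i n =>
    rw [Finsupp.weight_single, Finsupp.prod_single_index (by exact pow_zero _),
      nsmul_eq_mul, mul_comm, zpow_mul, zpow_natCast]

section WeightedScale

variable {σ R : Type*}

section CommSemiring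

variable [CommSemiring R] (w : σ → ℤ)

/-- The action of the one-dimensional torus `Rˣ` on polynomials in which the variable `i` has
weight `w i`: the element `t` acts by `X i ↦ t ^ w i * X i`. -/
noncomputable def weightedScale (t : Rˣ) : MvPolynomial σ R →ₐ[R] MvPolynomial σ R :=
  aeval fun i => C ((t ^ w i : Rˣ) : R) * X i

theorem weightedScale_monomial (t : Rˣ) (d : σ →₀ ℕ) (a : R) :
    weightedScale w t (monomial d a) =
      monomial d (((t ^ Finsupp.weight w d : Rˣ) : R) * a) := by
  rw [weightedScale, aeval_monomial, zpow_weight, mul_comm _ a, ← C_mul_monomial,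
    algebraMap_eq, monomial_eq]
  simp only [mul_pow, Finsupp.prod, Finset.prod_mul_distrib, Units.coe_prod,
    Units.val_pow_eq_pow_val, map_prod, map_pow]

theorem coeff_weightedScale (t : Rˣ) (f : MvPolynomial σ R) (d : σ →₀ ℕ) :
    coeff d (weightedScale w t f) = ((t ^ Finsupp.weight w d : Rˣ) : R) * coeff d f := by
  classical
  induction f using MvPolynomial.induction_on' with
  | add p q hp hq => rw [map_add, coeff_add, coeff_add, hp, hq, mul_add]
  | monomial e a =>
    rw [weightedScale_monomial, coeff_monomial, coeff_monomial, mul_ite, mul_zero]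
    split_ifs with h
    · rw [h]
    · rfl

variable {w}

theorem weightedScale_eq_smul_of_isWeightedHomogeneous {f : MvPolynomial σ R} {n : ℤ}
    (hf : IsWeightedHomogeneous w f n) (t : Rˣ) :
    weightedScale w t f = ((t ^ n : Rˣ) : R) • f := by
  ext d
  rw [coeff_weightedScale, coeff_smul, smul_eq_mul]
  by_cases hd : coeff d f = 0
  · rw [hd, mul_zero, mul_zero]
  · rw [hf hd]

end CommSemiring

section IsDomain

variable [CommRing R] [IsDomain R] [Infinite Rˣ]

theorem isWeightedHomogeneous_iff_forall_weightedScale_eq_smul {w : σ → ℤ}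
    {f : MvPolynomial σ R} {n : ℤ} :
    IsWeightedHomogeneous w f n ↔ ∀ t : Rˣ, weightedScale w t f = ((t ^ n : Rˣ) : R) • f := by
  refine ⟨weightedScale_eq_smul_of_isWeightedHomogeneous, fun h d hd => ?_⟩
  refine eq_of_forall_units_zpow_eq R fun t => Units.ext (mul_right_cancel₀ hd ?_)
  rw [← coeff_weightedScale, h t, coeff_smul, smul_eq_mul]

end IsDomain

end WeightedScale

section TwoVariables

theorem torusSubst_eq_weightedScale (k : Type*) [Field k] (r : ℤ) (m : ℕ) (t : kˣ) :
    torusSubst k r m t = weightedScale ![-r, m * r] t := by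
  ext i : 1
  fin_cases i <;> simp [torusSubst, weightedScale]

theorem forall_torusSubst_eq_iff {k : Type*} [Field k] [Infinite k] {r : ℤ} {m : ℕ}
    {f : MvPolynomial (Fin 2) k} :
    (∀ t : kˣ, torusSubst k r m t f = f) ↔ IsWeightedHomogeneous ![-r, m * r] f 0 := by
  have := infinite_units k
  simp only [isWeightedHomogeneous_iff_forall_weightedScale_eq_smul, torusSubst_eq_weightedScale,
    zpow_zero, Units.val_one, one_smul]

variable {R : Type*} [CommSemiring R]

theorem weight_neg_mul_eq_zero_iff {r : ℤ} (hr : r ≠ 0) (m : ℕ) (d : Fin 2 →₀ ℕ) :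
    Finsupp.weight ![-r, m * r] d = 0 ↔ d 0 = m * d 1 := by
  have hweight : Finsupp.weight ![-r, m * r] d = r * (m * d 1 - d 0) := by
    simp only [Finsupp.weight_eq_sum, Fin.sum_univ_two, Matrix.cons_val_zero,
      Matrix.cons_val_one, nsmul_eq_mul]
    ring
  rw [hweight, mul_eq_zero_iff_left hr, sub_eq_zero, eq_comm]
  norm_cast

theorem succ_dvd_of_isHomogeneous_of_isWeightedHomogeneous {r : ℤ} (hr : r ≠ 0) {m e : ℕ}
    {f : MvPolynomial (Fin 2) R} (hf : f ≠ 0) (hom : f.IsHomogeneous e)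
    (hw : IsWeightedHomogeneous ![-r, m * r] f 0) : m + 1 ∣ e := by
  obtain ⟨d, hd⟩ := ne_zero_iff.mp hf
  have hbalance : d 0 = m * d 1 := (weight_neg_mul_eq_zero_iff hr m d).mp (hw hd)
  have hdegree : d 0 + d 1 = e := by
    rw [← Fin.sum_univ_two, ← Finsupp.degree_eq_sum]
    exact of_not_not fun h => hd (hom.coeff_eq_zero h)
  exact ⟨d 1, by rw [← hdegree, hbalance, add_one_mul]⟩

variable (R) in
theorem isWeightedHomogeneous_X_pow_mul_X (r : ℤ) (m : ℕ) :
    IsWeightedHomogeneous ![-r, m * r] (X 0 ^ m * X 1 : MvPolynomial (Fin 2) R) 0 := by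
  have h := ((isWeightedHomogeneous_X R ![-r, m * r] 0).pow m).mul
    (isWeightedHomogeneous_X R ![-r, m * r] 1)
  simpa using h

end TwoVariables

/-- Let `k` be an infinite field, `r` a nonzero integer, and `m ≥ 1`, with
`kˣ` acting on `k[Y,Z]` by `t·Y = t^(−r)·Y`, `t·Z = t^(mr)·Z`. Then the least positive degree
of a `kˣ`-invariant homogeneous polynomial `f ∈ k[Y,Z]` with `f(1,1) ≠ 0` equals `m + 1`:
every invariant homogeneous polynomial of positive degree with `f(1,1) ≠ 0` has degree at
least `m + 1`, and the invariant `Y^m·Z` has degree `m + 1` and value `1` at `(1,1)`. -/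
theorem isLeast_degree_torus_invariant_at_one_one
    (k : Type*) [Field k] [Infinite k] (r : ℤ) (hr : r ≠ 0) (m : ℕ) (hm : 1 ≤ m) :
    IsLeast {e : ℕ | 0 < e ∧ ∃ f : MvPolynomial (Fin 2) k,
        (∀ t : kˣ, torusSubst k r m t f = f) ∧ f.IsHomogeneous e ∧
        MvPolynomial.eval (fun _ => (1 : k)) f ≠ 0}
      (m + 1) ∧
    (∀ t : kˣ,
        torusSubst k r m t (MvPolynomial.X 0 ^ m * MvPolynomial.X 1) =
          (MvPolynomial.X 0 ^ m * MvPolynomial.X 1 : MvPolynomial (Fin 2) k)) ∧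
    (MvPolynomial.X 0 ^ m * MvPolynomial.X 1 : MvPolynomial (Fin 2) k).IsHomogeneous (m + 1) ∧
    MvPolynomial.eval (fun _ => (1 : k))
      (MvPolynomial.X 0 ^ m * MvPolynomial.X 1 : MvPolynomial (Fin 2) k) = 1 := by
  have inv := forall_torusSubst_eq_iff.mpr (isWeightedHomogeneous_X_pow_mul_X k r m)
  have hom : (X 0 ^ m * X 1 : MvPolynomial (Fin 2) k).IsHomogeneous (m + 1) :=
    (isHomogeneous_X_pow 0 m).mul (isHomogeneous_X k 1)
  have ev : eval (fun _ => (1 : k)) (X 0 ^ m * X 1 : MvPolynomial (Fin 2) k) = 1 := by simp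
  refine ⟨⟨⟨m.succ_pos, _, inv, hom, ev.trans_ne one_ne_zero⟩, ?_⟩, inv, hom, ev⟩
  rintro e ⟨he, f, hinv, hhom, hf⟩
  have hf0 : f ≠ 0 := fun h => hf (by rw [h, map_zero])
  exact Nat.le_of_dvd he <| succ_dvd_of_isHomogeneous_of_isWeightedHomogeneous hr hf0 hhom
    (forall_torusSubst_eq_iff.mp hinv)
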